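/- (Lipschitz bound for the scale weights.) Let (V,d) be a metric space and b : V → ℝ a 1-Lipschitz function with b(v) ≥ 1/2 for all v ∈ V. Then for all u, v ∈ V and every t ∈ ℕ, |p_t(v) − p_t(u)|·2^t ≤ 8·d(u,v). -/

import Mathlib

/-!
As a function of `2 * b v`, the weight at scale `t` is a tent with vertex at `2 ^ t`, supported on
`[2 ^ (t - 1), 2 ^ (t + 1)]`; it is the dilation by `2 ^ t` of a single tent on `[1 / 2, 2]` whose
steepest slope is `2`. The factor `2 ^ t` cancels the dilation, leaving the Lipschitz constant `2`
in `2 * b v`, hence `4` in `b v`.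
-/

/-- The tent function that rises linearly from `0` at `1 / 2` to `1` at `1`, falls linearly to `0`
at `2`, and vanishes elsewhere. Its dilations by powers of two are the scale weights; the lattice
formula makes its Lipschitz constant immediate. -/
noncomputable def dyadicTent (y : ℝ) : ℝ :=
  max 0 (min (2 - y) (2 * y - 1))

theorem lipschitzWith_dyadicTent : LipschitzWith 2 dyadicTent := by
  have falling : LipschitzWith 2 fun y : ℝ ↦ 2 - y :=
    LipschitzWith.of_dist_le_mul fun x y ↦ by
      rw [dist_sub_left]
      exact le_mul_of_one_le_left dist_nonneg one_le_two
  have rising : LipschitzWith 2 fun y : ℝ ↦ 2 * y - 1 :=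
    LipschitzWith.of_dist_le_mul fun x y ↦ by
      simp [Real.dist_eq, ← mul_sub, abs_mul]
  exact ((falling.min rising).const_max 0).weaken (max_self _).le

theorem dyadicTent_of_le_half {y : ℝ} (hy : y ≤ 1 / 2) : dyadicTent y = 0 :=
  max_eq_left (min_le_of_right_le (by linarith))

theorem dyadicTent_of_two_le {y : ℝ} (hy : 2 ≤ y) : dyadicTent y = 0 :=
  max_eq_left (min_le_of_left_le (by linarith))

theorem dyadicTent_of_half_le_of_le_one {y : ℝ} (hy : 1 / 2 ≤ y) (hy' : y ≤ 1) :
    dyadicTent y = 2 * y - 1 := by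
  rw [dyadicTent, min_eq_right (by linarith), max_eq_right (by linarith)]

theorem dyadicTent_of_one_le_of_le_two {y : ℝ} (hy : 1 ≤ y) (hy' : y ≤ 2) :
    dyadicTent y = 2 - y := by
  rw [dyadicTent, min_eq_left (by linarith), max_eq_right (by linarith)]

theorem dyadicTent_div_two_pow {x : ℝ} {s : ℕ} (hs : 2 ^ s ≤ x) (hs' : x ≤ 2 ^ (s + 1)) (t : ℕ) :
    dyadicTent (x / 2 ^ t) =
      if t = s then 1 - (x - 2 ^ s) / 2 ^ s
      else if t = s + 1 then (x - 2 ^ s) / 2 ^ s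
      else 0 := by
  have two_pow_mono {m n : ℕ} (h : m ≤ n) : (2 : ℝ) ^ m ≤ 2 ^ n :=
    pow_le_pow_right₀ one_le_two h
  split_ifs with hts hts'
  · subst hts
    have one_le : 1 ≤ x / 2 ^ t := (one_le_div₀ (by positivity)).2 hs
    have le_two : x / 2 ^ t ≤ 2 := (div_le_iff₀' (by positivity)).2 hs'
    rw [dyadicTent_of_one_le_of_le_two one_le le_two]
    field_simp
    ring
  · subst hts'
    have half_le : 1 / 2 ≤ x / 2 ^ (s + 1) := by
      rw [le_div_iff₀ (by positivity), pow_succ]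
      linarith
    have le_one : x / 2 ^ (s + 1) ≤ 1 := (div_le_one₀ (by positivity)).2 hs'
    rw [dyadicTent_of_half_le_of_le_one half_le le_one]
    field_simp
    ring
  · rcases Nat.lt_or_ge t s with hlt | hge
    · have two_le : 2 ≤ x / 2 ^ t := by
        rw [le_div_iff₀ (by positivity), ← pow_succ']
        exact (two_pow_mono hlt).trans hs
      exact dyadicTent_of_two_le two_le
    · have le_half : x / 2 ^ t ≤ 1 / 2 := by
        have pow_le : (2 : ℝ) ^ (s + 1 + 1) ≤ 2 ^ t := two_pow_mono (by omega)
        rw [div_le_iff₀ (by positivity)]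
        linarith [pow_succ (2 : ℝ) (s + 1)]
      exact dyadicTent_of_le_half le_half

theorem abs_dyadicTent_div_two_pow_sub_le (x y : ℝ) (t : ℕ) :
    |dyadicTent (x / 2 ^ t) - dyadicTent (y / 2 ^ t)| * 2 ^ t ≤ 2 * |x - y| := by
  have tent_le : |dyadicTent (x / 2 ^ t) - dyadicTent (y / 2 ^ t)| ≤ 2 * |x / 2 ^ t - y / 2 ^ t| :=
    lipschitzWith_dyadicTent.dist_le_mul _ _
  calc
    |dyadicTent (x / 2 ^ t) - dyadicTent (y / 2 ^ t)| * 2 ^ t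
        ≤ 2 * |x / 2 ^ t - y / 2 ^ t| * 2 ^ t := by gcongr
    _ = 2 * |x - y| := by
      rw [← sub_div, abs_div, abs_of_pos (by positivity : (0 : ℝ) < 2 ^ t)]
      field_simp

theorem scale_weight_lipschitz_general {V : Type*} (b : V → ℝ) (tv : V → ℕ)
    (htv : ∀ v : V, (2 : ℝ) ^ (tv v) ≤ 2 * b v ∧ 2 * b v < 2 ^ (tv v + 1))
    (lam : V → ℝ) (hlam : ∀ v : V, lam v = (2 * b v - 2 ^ (tv v)) / 2 ^ (tv v))
    (pw : ℕ → V → ℝ)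
    (hpw : ∀ (t : ℕ) (v : V), pw t v =
      if t = tv v then 1 - lam v else if t = tv v + 1 then lam v else 0)
    (u v : V) (t : ℕ) : |pw t v - pw t u| * 2 ^ t ≤ 4 * |b v - b u| := by
  have pw_eq_tent (w : V) : pw t w = dyadicTent (2 * b w / 2 ^ t) := by
    rw [hpw, hlam, dyadicTent_div_two_pow (htv w).1 (htv w).2.le]
  calc
    |pw t v - pw t u| * 2 ^ t ≤ 2 * |2 * b v - 2 * b u| := by
      rw [pw_eq_tent, pw_eq_tent]
      exact abs_dyadicTent_div_two_pow_sub_le _ _ t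
    _ = 4 * |b v - b u| := by
      rw [← mul_sub, abs_mul, abs_two]
      ring

/-- Lipschitz bound for the scale weights: if `b : V → ℝ` is `1`-Lipschitz with
`b(v) ≥ 1/2`, `t_v` is the unique natural with `2^{t_v} ≤ 2b(v) < 2^{t_v+1}`,
`λ_v = (2b(v) - 2^{t_v})/2^{t_v}`, and `p_t(v)` equals `1 - λ_v` at `t = t_v`,
`λ_v` at `t = t_v + 1` and `0` otherwise, then
`|p_t(v) - p_t(u)|·2^t ≤ 8·d(u,v)` for all `u, v, t`. -/
theorem scale_weight_lipschitz {V : Type*} [MetricSpace V] (b : V → ℝ)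
    (hLip : ∀ u v : V, |b v - b u| ≤ dist u v) (hb : ∀ v : V, (1 : ℝ) / 2 ≤ b v)
    (tv : V → ℕ)
    (htv : ∀ v : V, (2 : ℝ) ^ (tv v) ≤ 2 * b v ∧ 2 * b v < 2 ^ (tv v + 1))
    (lam : V → ℝ) (hlam : ∀ v : V, lam v = (2 * b v - 2 ^ (tv v)) / 2 ^ (tv v))
    (pw : ℕ → V → ℝ)
    (hpw : ∀ (t : ℕ) (v : V), pw t v =
      if t = tv v then 1 - lam v else if t = tv v + 1 then lam v else 0) :
    ∀ (u v : V) (t : ℕ), |pw t v - pw t u| * 2 ^ t ≤ 8 * dist u v := by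
  intro u v t
  linarith [scale_weight_lipschitz_general b tv htv lam hlam pw hpw u v t, hLip u v,
    dist_nonneg (x := u) (y := v)]
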